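/- There exist at least four pairwise non-isomorphic EA(3^5)-additive (121,4,1)-designs; in particular, there exist three pairwise non-isomorphic EA(3^5)-additive (121,4,1)-designs none of which is isomorphic to the point-line design of the projective space PG(4,3). -/

import Mathlib

/-!
Identify the nonzero squares of `𝔽_243` with `ℤ/121` by `g ^ (2 * t) ↦ t`, where `g` is a primitive
root. All four designs have this point set and are invariant under translation of `ℤ/121`; each
is given by a difference family of ten base blocks whose sums in `𝔽_243` vanish. Only the additive
group of `𝔽_243` matters for zero sums, so a point `t` is realised as a window
`(s t, ..., s (t + 4))` of a linear recurring sequence `s` over `𝔽₃` of period 121, and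
`𝔽₃⁵` is carried to `GaloisField 3 5` by some linear equivalence. The zero-sum condition for all
blocks becomes `s t + s (t + a) + s (t + b) + s (t + c) = 0` for every `t` and every block
`{0, a, b, c}` through `0` (`digit_sum`).

Base blocks (modulo 121):
* design 0: `{0,1,21,55}`, `{0,2,59,112}`, `{0,3,44,63}`, `{0,4,79,95}`, `{0,5,17,48}`,
  `{0,6,56,94}`, `{0,7,81,99}`, `{0,8,36,106}`, `{0,10,35,49}`, `{0,13,37,89}`;
* design 1: `{0,1,52,93}`, `{0,2,86,89}`, `{0,4,15,78}`, `{0,5,26,82}`, `{0,6,16,25}`,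
  `{0,7,66,79}`, `{0,8,20,53}`, `{0,14,36,97}`, `{0,17,40,71}`, `{0,18,48,75}`;
* design 2: `{0,1,100,105}`, `{0,2,28,87}`, `{0,3,58,73}`, `{0,4,71,101}`, `{0,6,19,84}`,
  `{0,7,42,88}`, `{0,8,47,111}`, `{0,9,53,98}`, `{0,11,25,94}`, `{0,12,61,92}`;
* design 3: `{0,1,5,69}`, `{0,2,46,74}`, `{0,3,15,86}`, `{0,6,17,101}`, `{0,7,36,112}`,
  `{0,8,67,99}`, `{0,10,70,88}`, `{0,13,34,107}`, `{0,19,58,98}`, `{0,24,55,80}`.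

Design 3 is a copy of `PG(4,3)`, although this is not needed.

The designs are told apart by an isomorphism invariant: for two points `p ≠ z`, `quadCount` counts
(up to a bounded contribution of degenerate terms) the complete quadrilaterals in which `p` and
`z` are opposite vertices. Its maximum over all pairs is 50, 46, 38, 486 respectively; by
translation it suffices to compute it for `p = 0` (`eq_of_blocks_map`). Designs 0, 1, 2 are not
isomorphic to `PG(4,3)` because they violate the Veblen–Young axiom (`pg_veblen`, `not_veblen`).

The finite checks are evaluated by the kernel, so they are phrased with the natural-number
operations that it computes natively; the lemmas next to them translate back to `Fin 121`.
-/

open scoped Classical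

/-- A `(v,k,1)`-design (Steiner 2-design) with point set `V` and block collection `Bs`. -/
def IsSteinerDesign {α : Type*} [DecidableEq α] (V : Finset α) (Bs : Finset (Finset α))
    (v k : ℕ) : Prop :=
  V.card = v ∧ (∀ b ∈ Bs, b ⊆ V ∧ b.card = k) ∧
    ∀ x ∈ V, ∀ y ∈ V, x ≠ y → ∃! b, b ∈ Bs ∧ x ∈ b ∧ y ∈ b

/-- Two designs are isomorphic if some bijection between their point sets maps the
blocks of the first onto the blocks of the second. -/
def DesignIso {α β : Type*} (V1 : Finset α) (B1 : Finset (Finset α))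
    (V2 : Finset β) (B2 : Finset (Finset β)) : Prop :=
  ∃ f : α → β, Set.BijOn f ↑V1 ↑V2 ∧ B1.image (Finset.image f) = B2

/-- The points of the point-line design of `PG(4,3)`: the 1-dimensional
`𝔽_3`-subspaces of `𝔽_3^5`. -/
noncomputable def pgPoints : Finset (Submodule (ZMod 3) (Fin 5 → ZMod 3)) :=
  ((Finset.univ : Finset (Fin 5 → ZMod 3)).filter fun x => x ≠ 0).image
    fun x => Submodule.span (ZMod 3) {x}

/-- The blocks (lines) of the point-line design of `PG(4,3)`: for each 2-dimensional
`𝔽_3`-subspace of `𝔽_3^5`, the set of 1-dimensional subspaces contained in it. -/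
noncomputable def pgLines : Finset (Finset (Submodule (ZMod 3) (Fin 5 → ZMod 3))) :=
  (((Finset.univ : Finset ((Fin 5 → ZMod 3) × (Fin 5 → ZMod 3))).filter
      fun p => LinearIndependent (ZMod 3) ![p.1, p.2]).image
    fun p => pgPoints.filter fun q => q ≤ Submodule.span (ZMod 3) {p.1, p.2})

namespace AdditiveDesigns

/-! ### Tables and arithmetic -/

/-- The sequence `s`: the decimal digit of weight `10 ^ t` is `s t`, the constant coefficient of
`g ^ (2 * t)` in the basis `1, g, ..., g ^ 4`, where `g ^ 5 = g + 2` over `𝔽₃`. -/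
def seqDigits : ℕ :=
  1120220102222120012121010211122111110212201100120101110101002202101210210010122100020022102211000122022121121110020100001

/-- For each design, three decimal digits per entry: the digits of weight `1000 ^ d` give the smaller
of the two elements `a < b` such that `{0, d, a, b}` is the block through `0` and `d ≠ 0`. The entry
at `d = 0` is `0`. -/
def fstTable : Fin 4 → ℕ
  | 0 => 20057041075012050074028002025057031024072008026031022058034034007028052014004006070074075073013050066014070052027072007019004073019024091092078082038085032009066067038053003053058041002061110006001020062084015088010005018016032003012016060018025065013008010100027045104026022098033030039076015029001054077040005042023086037043009035011036081056017079044059021000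
  | 1 => 51084032011021010059012096009063033042022063009023030096033056061031014102056046001051027050002068084002061087022005031028007004021068018011027059017041041076050007039046106013085024072043030095013023008001092067042018043064012039047049069017044024003014003032101034081057028029073005006038054083077008010048040006004036055045074019105020066016026015035086052000
  | 2 => 99026055067016013035039044008014049065069048001099039065004001104009067069059011059012020029044007002046026006014064035049046013045023033064003031004055096045097015102074015034012031093003010037070030009027048030080051008079068089037007029033103027043034081036040023060050041002038085011020032005005024006010016017063083078061025018053047042019021071058028100000
  | 3 => 4044012064064011029059007060084071021013071029084033039006073008019031041011021047076059025022010073003076104012040023024039060028085028002087044106010001004008025041116040032018078091019052031024032052053018035047014049002009072033023065063079035020007038013043054056022105075014020066055042030094026058051006009003027034083095070016067036017001068015046005000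

/-- The larger of the two remaining elements of the block through `0` and `d`, encoded as in
`fstTable`. -/
def sndTable : Fin 4 → ℕ
  | 0 => 54110060091043088092098059039119104076082036030109029061100101081113084086079056085114117078037115067096093097033107099077095090080108117114090107065093045011087087071062044064102118112102119094021120064097023115035017040042069063116046118047111071089106049101083069109105103113083105111108051103055120080047048046051096089116068049068106099094048095063112055000
  | 1 => 92087034074077019072045102105106101049083110111054057112109095085081036112100064052120073067086076119089099119107026098029066015116088048117091114040069070088090079044094110055099038114047103100062104020093120090108075058094113065058108070071065060035097037118109118098103080080091082016060104107116053115075071025078097062113117115111053079025082078037089093000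
  | 2 => 104085070097017078081103089047083080102096051100120113108071105120053117107093025095061024041112042028079119019110074114109086115068032040082058060101118107077117063108082066036092072095073018043118050098038106054109106111086077112056088090075113052056062114062075076072054090087052119094091076021022091084057116116066110115092094057098111088084022101073087105000
  | 3 => 68072083116117095105091036078104106094034109114110043079017087067058056065115108049085113066030070100015092110118063042055102111075092077046100119109088005120099090096117082054051111113098053097080062057057061038093027093074016119103081096082102050026112050107103062097089114077048037090080081089108037098061101045086048107118115088045099112101069120086074069000

/-- The entry at `d` of the table `T`, as a residue modulo 121. -/
def entry (T d : ℕ) : ℕ := Nat.mod (Nat.mod (Nat.div T (Nat.pow 1000 d)) 1000) 121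

/-- Addition modulo 121 on representatives. -/
def addN (a b : ℕ) : ℕ := Nat.mod (Nat.add a b) 121

/-- Subtraction modulo 121 on representatives. -/
def subN (a b : ℕ) : ℕ := Nat.mod (Nat.add (Nat.sub 121 b) a) 121

/-- The term `s t` of the sequence encoded by `seqDigits`, for `t < 121`. -/
def digit (t : ℕ) : ℕ := Nat.mod (Nat.div seqDigits (Nat.pow 10 t)) 10

/-- Application `k n`, arranged so that reduction evaluates `n` to a numeral before substituting it. -/
def force {α : Type} (n : ℕ) (k : ℕ → α) : α :=
  Nat.rec (motive := fun _ => α) (k 0) (fun m _ => k (Nat.succ m)) n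

/-- The sum of `f m` over `m < n`, by structural recursion. -/
def sumBelow (n : ℕ) (f : ℕ → ℕ) : ℕ :=
  Nat.rec (motive := fun _ => ℕ) 0 (fun m s => Nat.add s (f m)) n

/-- The conjunction of `f m` over `m < n`, by structural recursion. -/
def allBelow (n : ℕ) (f : ℕ → Bool) : Bool :=
  Nat.rec (motive := fun _ => Bool) true (fun m s => and (f m) s) n

/-- The indicator of `a = b`. -/
def ind (a b : ℕ) : ℕ := Bool.rec (motive := fun _ => ℕ) 0 1 (Nat.beq a b)

theorem force_eq {α : Type} (n : ℕ) (k : ℕ → α) : force n k = k n := by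
  cases n <;> rfl

theorem sumBelow_eq (n : ℕ) (f : ℕ → ℕ) : sumBelow n f = ∑ m ∈ Finset.range n, f m := by
  induction n with
  | zero => rfl
  | succ n ih => rw [Finset.sum_range_succ, ← ih]; rfl

theorem allBelow_spec {n : ℕ} {f : ℕ → Bool} (h : allBelow n f = true) :
    ∀ m < n, f m = true := by
  induction n with
  | zero => intro m hm; omega
  | succ n ih =>
    have h' : (f n && allBelow n f) = true := h
    rw [Bool.and_eq_true] at h'
    intro m hm
    rcases Nat.lt_succ_iff_lt_or_eq.mp hm with hlt | rfl
    · exact ih h'.2 m hlt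
    · exact h'.1

theorem ind_eq (a b : ℕ) : ind a b = if a = b then 1 else 0 := by
  unfold ind
  split_ifs with h
  · rw [Nat.beq_eq.mpr h]
  · rw [Bool.eq_false_iff.mpr (fun h' => h (Nat.beq_eq.mp h'))]

/-- `quadCount i 0 z` written out on natural numbers, where `A` and `B` are the tables of design `i`;
see `quadCount_eq_countN`. -/
def countN (A B z : ℕ) : ℕ :=
  sumBelow 121 fun x =>
    force (entry A x) fun y₁ => force (entry B x) fun y₂ =>
    force (subN x z) fun w =>
    force (addN z (entry A w)) fun u₁ => force (addN z (entry B w)) fun u₂ =>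
    force (addN z (entry A (subN y₁ z))) fun c₁ => force (addN z (entry B (subN y₁ z))) fun c₂ =>
    force (addN z (entry A (subN y₂ z))) fun c₃ => force (addN z (entry B (subN y₂ z))) fun c₄ =>
    force (entry A u₁) fun v₁ => force (entry B u₁) fun v₂ =>
    force (entry A u₂) fun v₃ => force (entry B u₂) fun v₄ =>
    Nat.add
      (Nat.add
        (Nat.add (Nat.add (ind v₁ c₁) (ind v₁ c₂)) (Nat.add (ind v₂ c₁) (ind v₂ c₂)))
        (Nat.add (Nat.add (ind v₃ c₁) (ind v₃ c₂)) (Nat.add (ind v₄ c₁) (ind v₄ c₂))))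
      (Nat.add
        (Nat.add (Nat.add (ind v₁ c₃) (ind v₁ c₄)) (Nat.add (ind v₂ c₃) (ind v₂ c₄)))
        (Nat.add (Nat.add (ind v₃ c₃) (ind v₃ c₄)) (Nat.add (ind v₄ c₃) (ind v₄ c₄))))

/-! ### The designs on `Fin 121` -/

/-- The first of the two remaining points of the block through `0` and `d`; it is `0` for `d = 0`. -/
def fst (i : Fin 4) (d : Fin 121) : Fin 121 := ⟨entry (fstTable i) d, Nat.mod_lt _ (by decide)⟩

/-- The second of the two remaining points of the block through `0` and `d`; it is `0` for `d = 0`. -/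
def snd (i : Fin 4) (d : Fin 121) : Fin 121 := ⟨entry (sndTable i) d, Nat.mod_lt _ (by decide)⟩

theorem val_fst (i : Fin 4) (d : Fin 121) : (fst i d : ℕ) = entry (fstTable i) d := rfl

theorem val_snd (i : Fin 4) (d : Fin 121) : (snd i d : ℕ) = entry (sndTable i) d := rfl

theorem val_add_eq (a b : Fin 121) : ((a + b : Fin 121) : ℕ) = addN a b := rfl

theorem val_sub_eq (a b : Fin 121) : ((a - b : Fin 121) : ℕ) = subN a b := rfl

/-- The two points other than `x` and `y` on the block through `x` and `y`. By convention
`other i x x = {x, x}`. -/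
def other (i : Fin 4) (x y : Fin 121) : Multiset (Fin 121) :=
  {x + fst i (y - x), x + snd i (y - x)}

/-- The block of design `i` through `0` and `d`. -/
def base (i : Fin 4) (d : Fin 121) : Finset (Fin 121) := {0, d, fst i d, snd i d}

/-- The block of design `i` through `x` and `y`, for `x ≠ y`. -/
def line (i : Fin 4) (x y : Fin 121) : Finset (Fin 121) := (base i (y - x)).image (x + ·)

/-- The blocks of design `i`, as subsets of `Fin 121`. -/
def blocks (i : Fin 4) : Finset (Finset (Fin 121)) :=
  ((Finset.univ : Finset (Fin 121 × Fin 121)).filter fun p => p.1 ≠ p.2).image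
    fun p => line i p.1 p.2

set_option maxRecDepth 100000 in
theorem base_nodup : ∀ i : Fin 4, ∀ d : Fin 121, d ≠ 0 → [0, d, fst i d, snd i d].Nodup := by
  decide +kernel

theorem fst_zero : ∀ i : Fin 4, fst i 0 = 0 := by decide +kernel

theorem snd_zero : ∀ i : Fin 4, snd i 0 = 0 := by decide +kernel

set_option maxRecDepth 100000 in
theorem fst_table : ∀ i : Fin 4, ∀ d : Fin 121, d ≠ 0 →
    fst i (fst i d) = d ∧ snd i (fst i d) = snd i d ∨
    fst i (fst i d) = snd i d ∧ snd i (fst i d) = d := by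
  decide +kernel

set_option maxRecDepth 100000 in
theorem snd_table : ∀ i : Fin 4, ∀ d : Fin 121, d ≠ 0 →
    fst i (snd i d) = d ∧ snd i (snd i d) = fst i d ∨
    fst i (snd i d) = fst i d ∧ snd i (snd i d) = d := by
  decide +kernel

set_option maxRecDepth 100000 in
theorem neg_table : ∀ i : Fin 4, ∀ d : Fin 121, d ≠ 0 →
    fst i (-d) = fst i d - d ∧ snd i (-d) = snd i d - d ∨
    fst i (-d) = snd i d - d ∧ snd i (-d) = fst i d - d := by
  decide +kernel

theorem zero_mem_base (i : Fin 4) (d : Fin 121) : 0 ∈ base i d := by simp [base]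

theorem self_mem_base (i : Fin 4) (d : Fin 121) : d ∈ base i d := by simp [base]

theorem base_eq_of_mem {i : Fin 4} {d e : Fin 121} (hd : d ≠ 0) (he : e ∈ base i d)
    (he0 : e ≠ 0) : base i e = base i d := by
  simp only [base, Finset.mem_insert, Finset.mem_singleton] at he
  rcases he with rfl | rfl | rfl | rfl
  · exact absurd rfl he0
  · rfl
  · rcases fst_table i d hd with ⟨h₁, h₂⟩ | ⟨h₁, h₂⟩ <;>
    · ext t
      simp only [base, h₁, h₂, Finset.mem_insert, Finset.mem_singleton]
      tauto
  · rcases snd_table i d hd with ⟨h₁, h₂⟩ | ⟨h₁, h₂⟩ <;>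
    · ext t
      simp only [base, h₁, h₂, Finset.mem_insert, Finset.mem_singleton]
      tauto

theorem base_neg {i : Fin 4} {d : Fin 121} (hd : d ≠ 0) :
    base i (-d) = (base i d).image (· - d) := by
  rcases neg_table i d hd with ⟨h₁, h₂⟩ | ⟨h₁, h₂⟩ <;>
  · ext t
    simp only [base, h₁, h₂, Finset.image_insert, Finset.image_singleton, zero_sub, sub_self,
      Finset.mem_insert, Finset.mem_singleton]
    tauto

/-- Translating a block through `0` so that another of its points becomes `0` gives again one of the
tabulated blocks. This follows from the special cases checked on the tables. -/
theorem base_sub {i : Fin 4} {d a b : Fin 121} (hd : d ≠ 0) (ha : a ∈ base i d)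
    (hb : b ∈ base i d) (hab : a ≠ b) : base i (b - a) = (base i d).image (· - a) := by
  by_cases ha0 : a = 0
  · subst ha0
    simpa using base_eq_of_mem hd hb (Ne.symm hab)
  · have hneg : base i (-a) = (base i d).image (· - a) := by
      rw [base_neg ha0, base_eq_of_mem hd ha ha0]
    rw [← hneg]
    refine base_eq_of_mem (neg_ne_zero.mpr ha0) ?_ (sub_ne_zero.mpr (Ne.symm hab))
    rw [hneg]
    exact Finset.mem_image_of_mem _ hb

/-- Any two points of a block determine that block. -/
theorem line_eq_of_mem {i : Fin 4} {x y z w : Fin 121} (hxy : x ≠ y) (hz : z ∈ line i x y)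
    (hw : w ∈ line i x y) (hzw : z ≠ w) : line i z w = line i x y := by
  obtain ⟨a, ha, rfl⟩ := Finset.mem_image.mp hz
  obtain ⟨b, hb, rfl⟩ := Finset.mem_image.mp hw
  have hab : a ≠ b := fun h => hzw (by rw [h])
  unfold line
  rw [add_sub_add_left_eq_sub, base_sub (sub_ne_zero.mpr (Ne.symm hxy)) ha hb hab,
    Finset.image_image]
  refine Finset.image_congr fun c _ => ?_
  simp [add_assoc]

theorem left_mem_line (i : Fin 4) (x y : Fin 121) : x ∈ line i x y :=
  Finset.mem_image.mpr ⟨0, zero_mem_base _ _, add_zero x⟩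

theorem right_mem_line (i : Fin 4) (x y : Fin 121) : y ∈ line i x y :=
  Finset.mem_image.mpr ⟨y - x, self_mem_base _ _, add_sub_cancel x y⟩

theorem mem_blocks {i : Fin 4} {b : Finset (Fin 121)} :
    b ∈ blocks i ↔ ∃ x y, x ≠ y ∧ line i x y = b := by
  simp only [blocks, Finset.mem_image, Finset.mem_filter, Finset.mem_univ, true_and, Prod.exists]

-- Elaboration would otherwise try to evaluate these concrete finite sets.
attribute [local irreducible] blocks pgPoints pgLines

theorem line_mem_blocks {i : Fin 4} {x y : Fin 121} (h : x ≠ y) : line i x y ∈ blocks i :=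
  mem_blocks.mpr ⟨x, y, h, rfl⟩

theorem eq_line_of_mem_blocks {i : Fin 4} {b : Finset (Fin 121)} {x y : Fin 121}
    (hb : b ∈ blocks i) (hx : x ∈ b) (hy : y ∈ b) (hxy : x ≠ y) : b = line i x y := by
  obtain ⟨z, w, hzw, rfl⟩ := mem_blocks.mp hb
  exact (line_eq_of_mem hzw hx hy hxy).symm

theorem line_val {i : Fin 4} {x y : Fin 121} (h : x ≠ y) :
    (line i x y).val = x ::ₘ y ::ₘ other i x y := by
  have hnd := base_nodup i (y - x) (sub_ne_zero.mpr (Ne.symm h))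
  have hb : (base i (y - x)).val = ↑[0, y - x, fst i (y - x), snd i (y - x)] := by
    have : base i (y - x) = [0, y - x, fst i (y - x), snd i (y - x)].toFinset := by
      simp [base]
    rw [this, List.toFinset_val, hnd.dedup]
  unfold line
  rw [Finset.image_val_of_injOn (add_right_injective x).injOn, hb]
  simp [other]
  rfl

theorem card_line {i : Fin 4} {x y : Fin 121} (h : x ≠ y) : (line i x y).card = 4 := by
  rw [Finset.card_def, line_val h]; rfl

/-! ### The invariant -/

/-- The invariant: the number of `(x, y, u, v)` with `y` on the line `px`, `u` on the line `zx`, and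
`v` on both lines `pu` and `zy`, with multiplicity. Nondegenerate terms come from the complete
quadrilaterals with opposite vertices `p` and `z`, each counted four times. -/
def quadCount (i : Fin 4) (p z : Fin 121) : ℕ :=
  ∑ x, ((other i p x).map fun y => ((other i z x).map fun u =>
    ((other i p u).map fun v => (other i z y).count v).sum).sum).sum

theorem quadCount_congr {i j : Fin 4} {σ : Fin 121 → Fin 121} (hσ : Function.Bijective σ)
    (h : ∀ x y, (other i x y).map σ = other j (σ x) (σ y)) (p z : Fin 121) :
    quadCount j (σ p) (σ z) = quadCount i p z := by
  unfold quadCount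
  rw [← hσ.sum_comp]
  refine Finset.sum_congr rfl fun x _ => ?_
  simp only [← h, Multiset.map_map, Function.comp_def, Multiset.count_map_eq_count' σ _ hσ.1]

theorem quadCount_translate (i : Fin 4) (p z : Fin 121) :
    quadCount i p z = quadCount i 0 (z - p) := by
  have h := quadCount_congr (i := i) (j := i) (AddGroup.addRight_bijective p)
    (fun x y => by simp [other, add_right_comm]) 0 (z - p)
  simpa using h

theorem quadCount_eq_countN (i : Fin 4) (z : Fin 121) :
    quadCount i 0 z = countN (fstTable i) (sndTable i) z := by
  unfold quadCount countN
  rw [sumBelow_eq, Finset.sum_range]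
  refine Finset.sum_congr rfl fun x _ => ?_
  simp only [force_eq]
  simp only [other, sub_zero, zero_add, Multiset.insert_eq_cons, Multiset.map_cons,
    Multiset.map_singleton, Multiset.sum_cons, Multiset.sum_singleton, Multiset.count_cons,
    Multiset.count_singleton]
  simp only [ind_eq, Fin.ext_iff, val_fst, val_snd, val_add_eq, val_sub_eq, Nat.add_eq]
  ring

/-- The largest value of `quadCount i p z` over `p ≠ z`. -/
def maxQuad : Fin 4 → ℕ
  | 0 => 50
  | 1 => 46
  | 2 => 38
  | 3 => 486

/-- A point `z` with `quadCount i 0 z = maxQuad i`. -/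
def maxAt : Fin 4 → Fin 121
  | 0 => 16
  | 1 => 17
  | 2 => 2
  | 3 => 1

theorem countN_le (i : Fin 4) : allBelow 121 (fun z => or (Nat.beq z 0)
    (Nat.ble (countN (fstTable i) (sndTable i) z) (maxQuad i))) = true := by
  fin_cases i <;> decide +kernel

theorem countN_maxAt (i : Fin 4) :
    countN (fstTable i) (sndTable i) (maxAt i) = maxQuad i := by
  fin_cases i <;> decide +kernel

theorem maxAt_ne_zero : ∀ i, maxAt i ≠ 0 := by decide

theorem maxQuad_injective : Function.Injective maxQuad := by decide

theorem quadCount_le {i : Fin 4} {p z : Fin 121} (h : p ≠ z) : quadCount i p z ≤ maxQuad i := by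
  rw [quadCount_translate, quadCount_eq_countN]
  have h0 : ((z - p : Fin 121) : ℕ) ≠ 0 := fun h0 =>
    h (sub_eq_zero.mp (Fin.ext h0 : z - p = 0)).symm
  have := allBelow_spec (countN_le i) _ (z - p).isLt
  rw [Bool.or_eq_true] at this
  rcases this with h' | h'
  · exact absurd (Nat.beq_eq.mp h') h0
  · exact Nat.ble_eq.mp h'

/-- Distinct designs among the four are not isomorphic, since they have different maxima of
`quadCount`. -/
theorem eq_of_blocks_map {i j : Fin 4} {σ : Fin 121 → Fin 121} (hσ : Function.Injective σ)
    (h : ∀ b ∈ blocks i, b.image σ ∈ blocks j) : i = j := by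
  have hbij : Function.Bijective σ := Finite.injective_iff_bijective.mp hσ
  have hother : ∀ x y, (other i x y).map σ = other j (σ x) (σ y) := by
    intro x y
    by_cases hxy : x = y
    · subst hxy
      simp [other, fst_zero, snd_zero]
    · have hl : (line i x y).image σ = line j (σ x) (σ y) :=
        eq_line_of_mem_blocks (h _ (line_mem_blocks hxy))
          (Finset.mem_image_of_mem _ (left_mem_line i x y))
          (Finset.mem_image_of_mem _ (right_mem_line i x y)) (hσ.ne hxy)
      have hv := congrArg Finset.val hl
      rw [Finset.image_val_of_injOn hσ.injOn, line_val hxy, line_val (hσ.ne hxy)] at hv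
      simpa using hv
  have key := quadCount_congr hbij hother
  apply maxQuad_injective
  apply le_antisymm
  · rw [← countN_maxAt i, ← quadCount_eq_countN, ← key]
    exact quadCount_le (hσ.ne (maxAt_ne_zero i).symm)
  · obtain ⟨p, hp⟩ := hbij.2 0
    obtain ⟨z, hz⟩ := hbij.2 (maxAt j)
    rw [← countN_maxAt j, ← quadCount_eq_countN, ← hp, ← hz, key]
    refine quadCount_le fun hpz => maxAt_ne_zero j ?_
    rw [← hz, ← hp, hpz]

/-! ### The embedding into `𝔽₃⁵` -/

/-- For each block `{0, d, a, b}` with `d ≠ 0`, the terms of `s` at every translate of it sum to `0`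
modulo 3. -/
theorem digit_sum (i : Fin 4) : allBelow 121 (fun d => or (Nat.beq d 0) (
    force (entry (fstTable i) d) fun a => force (entry (sndTable i) d) fun b =>
    allBelow 121 fun t => Nat.beq 0 (Nat.mod (Nat.add (Nat.add (digit t) (digit (addN t d)))
      (Nat.add (digit (addN t a)) (digit (addN t b)))) 3))) = true := by
  fin_cases i <;> decide +kernel

/-- Five consecutive terms of `s`, read as a number in base 3. -/
def window (x : ℕ) : ℕ := Nat.add (Nat.mod (digit x) 3)
  (Nat.add (Nat.mul 3 (Nat.mod (digit (addN x 1)) 3))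
  (Nat.add (Nat.mul 9 (Nat.mod (digit (addN x 2)) 3))
  (Nat.add (Nat.mul 27 (Nat.mod (digit (addN x 3)) 3))
    (Nat.mul 81 (Nat.mod (digit (addN x 4)) 3)))))

theorem window_ne : allBelow 121 (fun x => force (window x) fun a => allBelow x fun y =>
    not (Nat.beq (window y) a)) = true := by decide +kernel

theorem window_inj {x y : Fin 121} (h : window x = window y) : x = y := by
  have main : ∀ x y : Fin 121, y < x → window y ≠ window x := by
    intro x y hyx heq
    have h₁ := allBelow_spec window_ne _ x.isLt
    rw [force_eq] at h₁
    have h₂ := allBelow_spec h₁ _ hyx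
    rw [Nat.beq_eq.mpr heq] at h₂
    exact absurd h₂ (by decide)
  rcases lt_trichotomy x y with hlt | heq | hgt
  · exact absurd h (main y x hlt)
  · exact heq
  · exact absurd h.symm (main x y hgt)

/-- The sequence `s` with values in `𝔽₃`. -/
def seq (t : Fin 121) : ZMod 3 := (digit t : ℕ)

theorem seq_sum {i : Fin 4} {d : Fin 121} (hd : d ≠ 0) (t : Fin 121) :
    seq t + seq (t + d) + (seq (t + fst i d) + seq (t + snd i d)) = 0 := by
  have h₁ := allBelow_spec (digit_sum i) _ d.isLt
  rw [Bool.or_eq_true] at h₁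
  rcases h₁ with h₁ | h₁
  · exact absurd (Fin.ext (Nat.beq_eq.mp h₁)) hd
  · rw [force_eq, force_eq] at h₁
    have h₂ := Nat.beq_eq.mp (allBelow_spec h₁ _ t.isLt)
    have h₃ := (ZMod.natCast_eq_zero_iff _ 3).mpr (Nat.dvd_of_mod_eq_zero h₂.symm)
    simp only [Nat.add_eq, Nat.cast_add] at h₃
    exact h₃

/-- The point `x` as a vector of `𝔽₃⁵`: five consecutive terms of the sequence. -/
def vec (x : Fin 121) : Fin 5 → ZMod 3 := fun j => seq (x + ⟨j, by omega⟩)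

theorem vec_injective : Function.Injective vec := by
  intro x y h
  have hj : ∀ j : Fin 5, digit (addN x j) % 3 = digit (addN y j) % 3 := fun j =>
    (ZMod.natCast_eq_natCast_iff' _ _ _).mp (congrFun h j)
  have h0 : ∀ x : Fin 121, addN x 0 = x := fun x => Nat.mod_eq_of_lt x.isLt
  have e0 := hj 0
  have e1 := hj 1
  have e2 := hj 2
  have e3 := hj 3
  have e4 := hj 4
  simp only [Fin.val_zero, h0] at e0
  apply window_inj
  show digit x % 3 + (3 * (digit (addN x 1) % 3) + (9 * (digit (addN x 2) % 3) +
    (27 * (digit (addN x 3) % 3) + 81 * (digit (addN x 4) % 3)))) =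
    digit y % 3 + (3 * (digit (addN y 1) % 3) + (9 * (digit (addN y 2) % 3) +
    (27 * (digit (addN y 3) % 3) + 81 * (digit (addN y 4) % 3))))
  rw [e0]
  exact congrArg _ (congrArg₂ _ (congrArg _ e1) (congrArg₂ _ (congrArg _ e2)
    (congrArg₂ _ (congrArg _ e3) (congrArg _ e4))))

theorem sum_vec_line {i : Fin 4} {x y : Fin 121} (h : x ≠ y) :
    ∑ t ∈ line i x y, vec t = 0 := by
  have hd : y - x ≠ 0 := sub_ne_zero.mpr (Ne.symm h)
  rw [Finset.sum_eq_multiset_sum, line_val h]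
  funext j
  have := seq_sum (i := i) hd (x + ⟨j, by omega⟩)
  simp only [other, Multiset.insert_eq_cons, Multiset.map_cons,
    Multiset.map_singleton, Multiset.sum_cons, Multiset.sum_singleton, Pi.add_apply, Pi.zero_apply,
    vec]
  have hy : x + ⟨j, by omega⟩ + (y - x) = y + ⟨j, by omega⟩ := by abel
  rw [← this, hy, add_right_comm x (fst i _), add_right_comm x (snd i _), ← add_assoc]

/-- An identification of `𝔽₃⁵` with the additive group of `𝔽_243`. It need not be compatible with
multiplication. -/
noncomputable def toField : (Fin 5 → ZMod 3) ≃ₗ[ZMod 3] GaloisField 3 5 :=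
  LinearEquiv.ofFinrankEq _ _ (by rw [GaloisField.finrank 3 (by decide)]; simp)

/-- The point `x` as an element of `𝔽_243`. -/
noncomputable def emb (x : Fin 121) : GaloisField 3 5 := toField (vec x)

theorem emb_injective : Function.Injective emb := toField.injective.comp vec_injective

/-- Design `i` with its points in `𝔽_243`. -/
noncomputable def design (i : Fin 4) :
    Finset (GaloisField 3 5) × Finset (Finset (GaloisField 3 5)) :=
  (Finset.univ.image emb, (blocks i).image (Finset.image emb))

theorem mem_design_points {i : Fin 4} {x : GaloisField 3 5} :
    x ∈ (design i).1 ↔ ∃ t, emb t = x := by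
  simp only [design, Finset.mem_image, Finset.mem_univ, true_and]

theorem mem_design_blocks {i : Fin 4} {b : Finset (GaloisField 3 5)} :
    b ∈ (design i).2 ↔ ∃ c, c ∈ blocks i ∧ c.image emb = b := by
  simp only [design, Finset.mem_image]

attribute [local irreducible] design

theorem emb_mem (i : Fin 4) (t : Fin 121) : emb t ∈ (↑(design i).1 : Set (GaloisField 3 5)) :=
  Finset.mem_coe.mpr (mem_design_points.mpr ⟨t, rfl⟩)

theorem exists_line {i : Fin 4} {b : Finset (GaloisField 3 5)} (hb : b ∈ (design i).2) :
    ∃ x y, x ≠ y ∧ b = (line i x y).image emb := by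
  obtain ⟨c, hc, rfl⟩ := mem_design_blocks.mp hb
  obtain ⟨x, y, hxy, rfl⟩ := mem_blocks.mp hc
  exact ⟨x, y, hxy, rfl⟩

theorem image_line_mem {i : Fin 4} {x y : Fin 121} (h : x ≠ y) :
    (line i x y).image emb ∈ (design i).2 :=
  mem_design_blocks.mpr ⟨_, line_mem_blocks h, rfl⟩

theorem design_sum {i : Fin 4} {b : Finset (GaloisField 3 5)} (hb : b ∈ (design i).2) :
    ∑ x ∈ b, x = 0 := by
  obtain ⟨x, y, hxy, rfl⟩ := exists_line hb
  rw [Finset.sum_image emb_injective.injOn]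
  simp only [emb]
  rw [← map_sum, sum_vec_line hxy, map_zero]

theorem design_isSteiner (i : Fin 4) : IsSteinerDesign (design i).1 (design i).2 121 4 := by
  refine ⟨?_, ?_, ?_⟩
  · simp [design, Finset.card_image_of_injective _ emb_injective]
  · intro b hb
    obtain ⟨x, y, hxy, rfl⟩ := exists_line hb
    refine ⟨fun t ht => ?_, ?_⟩
    · obtain ⟨s, -, rfl⟩ := Finset.mem_image.mp ht
      exact mem_design_points.mpr ⟨s, rfl⟩
    rw [Finset.card_image_of_injective _ emb_injective, card_line hxy]
  · intro x hx y hy hxy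
    obtain ⟨x, rfl⟩ := mem_design_points.mp hx
    obtain ⟨y, rfl⟩ := mem_design_points.mp hy
    have hne : x ≠ y := fun h => hxy (congrArg _ h)
    refine ⟨(line i x y).image emb, ⟨image_line_mem hne,
      Finset.mem_image_of_mem _ (left_mem_line i x y),
      Finset.mem_image_of_mem _ (right_mem_line i x y)⟩, ?_⟩
    rintro b ⟨hb, hxb, hyb⟩
    obtain ⟨z, w, hzw, rfl⟩ := exists_line hb
    rw [emb_injective.mem_finset_image] at hxb hyb
    rw [line_eq_of_mem hzw hxb hyb hne]

theorem design_spec (i : Fin 4) : IsSteinerDesign (design i).1 (design i).2 121 4 ∧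
    ∀ b ∈ (design i).2, ∑ x ∈ b, x = 0 :=
  ⟨design_isSteiner i, fun _ hb => design_sum hb⟩

theorem design_iso {i j : Fin 4}
    (h : DesignIso (design i).1 (design i).2 (design j).1 (design j).2) : i = j := by
  obtain ⟨f, hf, hB⟩ := h
  have hex : ∀ x, ∃ y, emb y = f (emb x) := fun x =>
    mem_design_points.mp (Finset.mem_coe.mp (hf.mapsTo (emb_mem i x)))
  choose σ hσ using hex
  have hinj : Function.Injective σ := by
    intro x y hxy
    refine emb_injective (hf.injOn (emb_mem i x) (emb_mem i y) ?_)
    rw [← hσ, ← hσ, hxy]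
  refine eq_of_blocks_map hinj fun b hb => ?_
  have hmem : (b.image emb).image f ∈ (design j).2 := by
    rw [← hB]
    exact Finset.mem_image_of_mem _ (mem_design_blocks.mpr ⟨b, hb, rfl⟩)
  have hcomp : (b.image emb).image f = (b.image σ).image emb := by
    rw [Finset.image_image, Finset.image_image]
    exact Finset.image_congr fun x _ => (hσ x).symm
  rw [hcomp] at hmem
  obtain ⟨c, hc, hcb⟩ := mem_design_blocks.mp hmem
  rwa [← Finset.image_injective emb_injective hcb]

/-! ### Comparison with `PG(4,3)` -/

/-- The ambient space of `PG(4,3)`. -/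
abbrev Vec := Fin 5 → ZMod 3

theorem mem_pgPoints {q : Submodule (ZMod 3) Vec} :
    q ∈ pgPoints ↔ ∃ x : Vec, x ≠ 0 ∧ Submodule.span (ZMod 3) {x} = q := by
  simp only [pgPoints, Finset.mem_image, Finset.mem_filter, Finset.mem_univ, true_and]

theorem finrank_span_pair_eq_two {x y : Vec} (h : LinearIndependent (ZMod 3) ![x, y]) :
    Module.finrank (ZMod 3) (Submodule.span (ZMod 3) {x, y}) = 2 := by
  have := finrank_span_eq_card h
  rwa [Matrix.range_cons, Matrix.range_cons, Matrix.range_empty, Set.union_empty,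
    Set.singleton_union, Fintype.card_fin] at this

theorem exists_rep {q : Submodule (ZMod 3) Vec} (hq : q ∈ pgPoints) :
    ∃ x : Vec, x ≠ 0 ∧ q = Submodule.span (ZMod 3) {x} := by
  obtain ⟨x, hx, rfl⟩ := mem_pgPoints.mp hq
  exact ⟨x, hx, rfl⟩

theorem exists_plane {l : Finset (Submodule (ZMod 3) Vec)} (hl : l ∈ pgLines) :
    ∃ S : Submodule (ZMod 3) Vec, Module.finrank (ZMod 3) S = 2 ∧
      ∀ q, q ∈ l ↔ q ∈ pgPoints ∧ q ≤ S := by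
  simp only [pgLines, Finset.mem_image, Finset.mem_filter, Finset.mem_univ, true_and] at hl
  obtain ⟨p, hp, rfl⟩ := hl
  exact ⟨_, finrank_span_pair_eq_two hp, fun q => by rw [Finset.mem_filter]⟩

/-- If `p, x, y` represent distinct points of a line, then `y` is a combination of `p` and `x` with
nonzero coefficients. -/
theorem exists_coeff {S : Submodule (ZMod 3) Vec} (hS : Module.finrank (ZMod 3) S = 2)
    {p x y : Vec} (hp0 : p ≠ 0) (hx0 : x ≠ 0) (hp : p ∈ S) (hx : x ∈ S) (hy : y ∈ S)
    (hpx : Submodule.span (ZMod 3) {p} ≠ Submodule.span (ZMod 3) {x})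
    (hxy : Submodule.span (ZMod 3) {x} ≠ Submodule.span (ZMod 3) {y})
    (hpy : Submodule.span (ZMod 3) {p} ≠ Submodule.span (ZMod 3) {y}) (hy0 : y ≠ 0) :
    ∃ a b : ZMod 3, a ≠ 0 ∧ b ≠ 0 ∧ a • p + b • x = y := by
  have hspan : ∀ (c : ZMod 3) (v : Vec), c ≠ 0 →
      Submodule.span (ZMod 3) {c • v} = Submodule.span (ZMod 3) {v} := fun c v hc =>
    Submodule.span_singleton_smul_eq (IsUnit.mk0 c hc) v
  have hli : LinearIndependent (ZMod 3) ![p, x] := by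
    rw [LinearIndependent.pair_iff' hp0]
    intro a ha
    by_cases ha0 : a = 0
    · exact hx0 (by rw [← ha, ha0, zero_smul])
    · exact hpx (by rw [← ha, hspan a p ha0])
  have hfin : Module.finrank (ZMod 3) (Submodule.span (ZMod 3) {p, x}) = 2 :=
    finrank_span_pair_eq_two hli
  have hSeq : Submodule.span (ZMod 3) {p, x} = S := by
    refine Submodule.eq_of_le_of_finrank_eq ?_ (hfin.trans hS.symm)
    rw [Submodule.span_le]
    rintro v (rfl | rfl)
    · exact hp
    · exact hx
  rw [← hSeq, Submodule.mem_span_pair] at hy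
  obtain ⟨a, b, hab⟩ := hy
  refine ⟨a, b, ?_, ?_, hab⟩
  · rintro rfl
    rw [zero_smul, zero_add] at hab
    by_cases hb0 : b = 0
    · exact hy0 (by rw [← hab, hb0, zero_smul])
    · exact hxy (by rw [← hab, hspan b x hb0])
  · rintro rfl
    rw [zero_smul, add_zero] at hab
    by_cases ha0 : a = 0
    · exact hy0 (by rw [← hab, ha0, zero_smul])
    · exact hpy (by rw [← hab, hspan a p ha0])

/-- The Veblen–Young axiom in `PG(4,3)`: if the lines `pxy` and `puv` meet in `p`, then the lines `xu`
and `yv` meet. -/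
theorem pg_veblen {l₁ l₂ l₃ l₄ : Finset (Submodule (ZMod 3) Vec)} (h₁ : l₁ ∈ pgLines)
    (h₂ : l₂ ∈ pgLines) (h₃ : l₃ ∈ pgLines) (h₄ : l₄ ∈ pgLines)
    {p x y u v : Submodule (ZMod 3) Vec} (hp₁ : p ∈ l₁) (hx₁ : x ∈ l₁) (hy₁ : y ∈ l₁)
    (hp₂ : p ∈ l₂) (hu₂ : u ∈ l₂) (hv₂ : v ∈ l₂) (hx₃ : x ∈ l₃) (hu₃ : u ∈ l₃)
    (hy₄ : y ∈ l₄) (hv₄ : v ∈ l₄) (hpx : p ≠ x) (hpy : p ≠ y) (hxy : x ≠ y) (hpu : p ≠ u)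
    (hpv : p ≠ v) (huv : u ≠ v) (hxu : x ≠ u) : ∃ q, q ∈ l₃ ∧ q ∈ l₄ := by
  obtain ⟨S₁, hS₁, hl₁⟩ := exists_plane h₁
  obtain ⟨S₂, hS₂, hl₂⟩ := exists_plane h₂
  obtain ⟨S₃, -, hl₃⟩ := exists_plane h₃
  obtain ⟨S₄, -, hl₄⟩ := exists_plane h₄
  rw [hl₁] at hp₁ hx₁ hy₁
  rw [hl₂] at hp₂ hu₂ hv₂
  rw [hl₃] at hx₃ hu₃
  rw [hl₄] at hy₄ hv₄
  obtain ⟨P, hP, rfl⟩ := exists_rep hp₁.1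
  obtain ⟨X, hX, rfl⟩ := exists_rep hx₁.1
  obtain ⟨Y, hY, rfl⟩ := exists_rep hy₁.1
  obtain ⟨U, hU, rfl⟩ := exists_rep hu₂.1
  obtain ⟨W, hW, rfl⟩ := exists_rep hv₂.1
  simp only [Submodule.span_singleton_le_iff_mem] at hp₁ hx₁ hy₁ hp₂ hu₂ hv₂ hx₃ hu₃ hy₄ hv₄
  obtain ⟨a, b, ha, hb, hab⟩ := exists_coeff hS₁ hP hX hp₁.2 hx₁.2 hy₁.2 hpx hxy hpy hY
  obtain ⟨c, d, hc, hd, hcd⟩ := exists_coeff hS₂ hP hU hp₂.2 hu₂.2 hv₂.2 hpu huv hpv hW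
  -- Eliminating `P` from `Y = a P + b X` and `W = c P + d U` gives the common point.
  have hq : c • Y - a • W = (c * b) • X - (a * d) • U := by
    rw [← hab, ← hcd]
    module
  have hq0 : c • Y - a • W ≠ 0 := by
    rw [hq, sub_ne_zero]
    intro h
    apply hxu
    rw [← Submodule.span_singleton_smul_eq (IsUnit.mk0 _ (mul_ne_zero hc hb)) X, h,
      Submodule.span_singleton_smul_eq (IsUnit.mk0 _ (mul_ne_zero ha hd)) U]
  have hqp : Submodule.span (ZMod 3) {c • Y - a • W} ∈ pgPoints :=
    mem_pgPoints.mpr ⟨_, hq0, rfl⟩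
  refine ⟨Submodule.span (ZMod 3) {c • Y - a • W}, (hl₃ _).mpr ⟨hqp, ?_⟩,
    (hl₄ _).mpr ⟨hqp, ?_⟩⟩
  · rw [Submodule.span_singleton_le_iff_mem, hq]
    exact S₃.sub_mem (S₃.smul_mem _ hx₃.2) (S₃.smul_mem _ hu₃.2)
  · rw [Submodule.span_singleton_le_iff_mem]
    exact S₄.sub_mem (S₄.smul_mem _ hy₄.2) (S₄.smul_mem _ hv₄.2)

theorem fst_mem_line (i : Fin 4) (x : Fin 121) : fst i x ∈ line i 0 x := by
  simp [line, base]

/-- In designs 0, 1, 2 the Veblen–Young axiom fails for `p = 0`, `x = 1`, `u = 2` and the points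
`y = fst i 1`, `v = fst i 2`: the lines `xu` and `yv` are disjoint. -/
theorem not_veblen : ∀ i : Fin 4, i ≠ 3 →
    [0, 1, 2, fst i 1, fst i 2].Nodup ∧
      ∀ t ∈ line i 1 2, t ∉ line i (fst i 1) (fst i 2) := by
  decide +kernel

theorem design_not_iso_pg {i : Fin 4} (hi : i ≠ 3) :
    ¬ DesignIso (design i).1 (design i).2 pgPoints pgLines := by
  rintro ⟨f, hf, hB⟩
  obtain ⟨hnd, hdisj⟩ := not_veblen i hi
  simp only [List.nodup_cons, List.mem_cons, List.not_mem_nil, or_false, not_or] at hnd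
  obtain ⟨⟨h01, h02, h0y, h0v⟩, ⟨h12, h1y, -⟩, ⟨-, h2v⟩, hyv, -⟩ := hnd
  have hinj : Function.Injective (fun x => f (emb x)) := fun x y hxy =>
    emb_injective (hf.injOn (emb_mem i x) (emb_mem i y) hxy)
  have hl : ∀ {x y : Fin 121}, x ≠ y → ((line i x y).image emb).image f ∈ pgLines := by
    intro x y hxy
    rw [← hB]
    exact Finset.mem_image_of_mem _ (image_line_mem hxy)
  have hm : ∀ {t x y : Fin 121}, t ∈ line i x y →
      f (emb t) ∈ ((line i x y).image emb).image f := fun ht =>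
    Finset.mem_image_of_mem _ (Finset.mem_image_of_mem _ ht)
  obtain ⟨q, hq₃, hq₄⟩ := pg_veblen (hl h01) (hl h02) (hl h12) (hl hyv)
    (hm (left_mem_line i 0 1)) (hm (right_mem_line i 0 1)) (hm (fst_mem_line i 1))
    (hm (left_mem_line i 0 2)) (hm (right_mem_line i 0 2)) (hm (fst_mem_line i 2))
    (hm (left_mem_line i 1 2)) (hm (right_mem_line i 1 2))
    (hm (left_mem_line i (fst i 1) (fst i 2))) (hm (right_mem_line i (fst i 1) (fst i 2)))
    (hinj.ne h01) (hinj.ne h0y) (hinj.ne h1y) (hinj.ne h02) (hinj.ne h0v) (hinj.ne h2v)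
    (hinj.ne h12)
  simp only [Finset.mem_image, exists_exists_and_eq_and] at hq₃ hq₄
  obtain ⟨s, hs, hsq⟩ := hq₃
  obtain ⟨t, ht, htq⟩ := hq₄
  have hst : s = t := hinj (hsq.trans htq.symm)
  exact hdisj s hs (hst ▸ ht)

end AdditiveDesigns

/-- There exist at least four pairwise non-isomorphic `EA(3^5)`-additive
`(121,4,1)`-designs; in particular, three of them are pairwise non-isomorphic and none
of these three is isomorphic to the point-line design of `PG(4,3)`. -/
theorem stmt10 :
    ∃ D : Fin 4 → Finset (GaloisField 3 5) × Finset (Finset (GaloisField 3 5)),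
      (∀ i, IsSteinerDesign (D i).1 (D i).2 121 4 ∧ ∀ b ∈ (D i).2, ∑ x ∈ b, x = 0) ∧
      (∀ i j, i ≠ j → ¬ DesignIso (D i).1 (D i).2 (D j).1 (D j).2) ∧
      ∃ s : Finset (Fin 4), s.card = 3 ∧
        ∀ i ∈ s, ¬ DesignIso (D i).1 (D i).2 pgPoints pgLines := by
  refine ⟨AdditiveDesigns.design, AdditiveDesigns.design_spec,
    fun i j hij h => hij (AdditiveDesigns.design_iso h), {0, 1, 2}, by decide, fun i hi => ?_⟩
  refine AdditiveDesigns.design_not_iso_pg ?_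
  rintro rfl
  revert hi
  decide
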